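/- For every integer n ≥ 1 there exists a 2^n-periodic bisequence t : ℤ → {0,1} such that the 2^n blocks (t_j, t_{j+1}, …, t_{j+n−1}) for j = 1, 2, …, 2^n are pairwise distinct; equivalently, every block in {0,1}^n occurs exactly once among them. -/

import Mathlib

open Equiv Equiv.Perm in
/-- Composing with a transposition of points in different cycles joins the cycles. -/
theorem join_cycles {V : Type*} [Finite V] [DecidableEq V] (f : Perm V) (x y : V)
    (h : ¬ f.SameCycle x y) : (f * swap x y).SameCycle x y := by
  classical
  have hex : ∃ m, 0 < m ∧ (f ^ m) y = y := by
    refine ⟨orderOf f, orderOf_pos f, ?_⟩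
    simp [pow_orderOf_eq_one]
  obtain ⟨hm0, hm⟩ := Nat.find_spec hex
  have hmin := fun k => @Nat.find_min _ _ hex k
  set m := Nat.find hex
  have key : ∀ k, k + 1 ≤ m → ((f * swap x y) ^ (k + 1)) x = (f ^ (k + 1)) y := by
    intro k
    induction k with
    | zero => intro _; simp
    | succ k ih =>
      intro hk
      rw [pow_succ', Perm.mul_apply, ih (by omega), pow_succ' f (k + 1), Perm.mul_apply,
        Perm.mul_apply, swap_apply_of_ne_of_ne]
      · intro he
        apply h
        apply SameCycle.symm
        exact ⟨((k + 1 : ℕ) : ℤ), by rw [zpow_natCast]; exact he⟩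
      · intro he
        exact hmin (k + 1) (by omega) ⟨by omega, he⟩
  refine ⟨(m : ℤ), ?_⟩
  rw [zpow_natCast]
  obtain ⟨k, hk⟩ : ∃ k, m = k + 1 := ⟨m - 1, by omega⟩
  have := key k (by omega)
  rw [← hk] at this
  rw [this, hm]

open Equiv Equiv.Perm in
theorem join_cycles_mono {V : Type*} [Finite V] [DecidableEq V] (f : Perm V) (x y : V)
    (h : ¬ f.SameCycle x y) (a b : V) (hab : f.SameCycle a b) :
    (f * swap x y).SameCycle a b := by
  have hj := join_cycles f x y h
  set g := f * swap x y with hg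
  have hs : ∀ a, g.SameCycle a (swap x y a) := by
    intro a
    rw [swap_apply_def]
    split_ifs with h1 h2
    · subst h1; exact hj
    · subst h2; exact hj.symm
    · exact SameCycle.refl _ _
  have step : ∀ a, g.SameCycle a (f a) := by
    intro a
    have : f a = g (swap x y a) := by simp [hg]
    rw [this]
    exact sameCycle_apply_right.2 (hs a)
  obtain ⟨i, hi, -, rfl⟩ := hab.exists_pow_eq''
  clear hab hi
  induction i with
  | zero => exact SameCycle.refl _ _
  | succ i ih =>
    rw [pow_succ', Perm.mul_apply]
    exact ih.trans (step _)

/-- A set of words containing `0` and closed under shift successors is everything. -/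
theorem closed_all {m : ℕ} (S : Set (Fin (m + 1) → Fin 2)) (h0 : (fun _ => 0) ∈ S)
    (hS : ∀ y ∈ S, ∀ z : Fin (m + 1) → Fin 2,
      (∀ k : Fin m, z k.castSucc = y k.succ) → z ∈ S) (w) : w ∈ S := by
  let u : ℕ → Fin (m + 1) → Fin 2 := fun r k =>
    if h : m + 1 ≤ k + r ∧ k + r - (m + 1) < m + 1 then w ⟨k + r - (m + 1), h.2⟩ else 0
  have hu : ∀ r, r ≤ m + 1 → u r ∈ S := by
    intro r
    induction r with
    | zero =>
      intro _
      convert h0 using 1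
      funext k
      have := k.2
      simp only [u]
      rw [dif_neg (by omega)]
    | succ r ih =>
      intro hr
      refine hS _ (ih (by omega)) _ ?_
      intro k
      have e : (k : ℕ) + (r + 1) = k + 1 + r := by omega
      simp only [u, Fin.val_castSucc, Fin.val_succ, e]
  have := hu (m + 1) le_rfl
  convert this using 1
  funext k
  have := k.2
  simp only [u]
  rw [dif_pos (by omega)]
  congr 1
  ext
  simp

open Equiv Equiv.Perm in
theorem exists_full_cycle (m : ℕ) : ∃ f : Perm (Fin (m + 1) → Fin 2),
    (∀ v, ∀ k : Fin m, f v k.castSucc = v k.succ) ∧ ∀ w, f.SameCycle (fun _ => 0) w := by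
  classical
  let A : Set (Perm (Fin (m + 1) → Fin 2)) :=
    {f | ∀ v, ∀ k : Fin m, f v k.castSucc = v k.succ}
  have hA : A.Nonempty := by
    refine ⟨Equiv.arrowCongr (finRotate (m + 1)).symm (Equiv.refl _), ?_⟩
    intro v k
    simp [Equiv.arrowCongr]
  obtain ⟨f, hf, hmax⟩ := Set.exists_max_image A
    (fun f => Set.ncard {w | f.SameCycle (fun _ => 0) w}) (Set.toFinite A) hA
  refine ⟨f, hf, fun w => ?_⟩
  refine closed_all {w | f.SameCycle (fun _ => 0) w} (SameCycle.refl _ _) ?_ w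
  intro y hy z hz
  by_contra hn
  simp only [Set.mem_ofPred_eq] at hy hn
  have hx : ¬ f.SameCycle y (f⁻¹ z) := by
    intro h
    have h2 := sameCycle_apply_right.2 (hy.trans h)
    have e : f (f⁻¹ z) = z := by simp
    rw [e] at h2
    exact hn h2
  have htail : ∀ k : Fin m, (f⁻¹ z) k.succ = y k.succ := by
    intro k
    rw [← hz k, ← hf (f⁻¹ z) k]
    simp
  have hg : f * swap y (f⁻¹ z) ∈ A := by
    intro v k
    rw [Perm.mul_apply, hf, swap_apply_def]
    split_ifs with h1 h2
    · rw [h1, htail]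
    · rw [h2, htail]
    · rfl
  have hle := hmax _ hg
  refine absurd hle (not_le.2 (Set.ncard_lt_ncard ?_ (Set.toFinite _)))
  refine Set.ssubset_iff_exists.2 ⟨fun w hw => join_cycles_mono f _ _ hx _ _ hw, f⁻¹ z, ?_, ?_⟩
  · exact (join_cycles_mono f _ _ hx _ _ hy).trans (join_cycles f _ _ hx)
  · intro h
    exact hx (hy.symm.trans h)

/-- For every `n ≥ 1` there is a `2^n`-periodic bisequence `t : ℤ → Fin 2` whose
`n`-blocks at positions `1, 2, …, 2^n` are pairwise distinct (equivalently, every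
block in `{0,1}^n` occurs exactly once among them). -/
theorem stmt_7 (n : ℕ) (hn : 1 ≤ n) :
    ∃ t : ℤ → Fin 2, (∀ i : ℤ, t (i + (2 ^ n : ℕ)) = t i) ∧
      Function.Injective
        (fun j : Fin (2 ^ n) => (fun k : Fin n => t (((j : ℕ) : ℤ) + 1 + (k : ℕ)))) := by
  obtain ⟨m, rfl⟩ : ∃ m, n = m + 1 := ⟨n - 1, by omega⟩
  obtain ⟨f, hf, hc⟩ := exists_full_cycle m
  have hcyc : f.IsCycleOn ((Finset.univ : Finset (Fin (m + 1) → Fin 2)) : Set _) := by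
    refine ⟨by simp [Set.bijOn_univ, f.bijective], fun x _ y _ => (hc x).symm.trans (hc y)⟩
  have heq : ∀ i j : ℤ, (f ^ i) (fun _ => 0) = (f ^ j) (fun _ => 0) ↔
      i ≡ j [ZMOD (2 ^ (m + 1) : ℕ)] := by
    intro i j
    rw [hcyc.zpow_apply_eq_zpow_apply (Finset.mem_univ _)]
    simp
  have hblock : ∀ (k : ℕ) (hk : k < m + 1) (i : ℤ),
      (f ^ (i + k)) (fun _ => 0) 0 = (f ^ i) (fun _ => 0) ⟨k, hk⟩ := by
    intro k
    induction k with
    | zero => intro hk i; simp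
    | succ k ih =>
      intro hk i
      have e : i + ((k + 1 : ℕ) : ℤ) = (1 + i) + k := by push_cast; ring
      rw [e, ih (by omega), zpow_add, zpow_one, Equiv.Perm.mul_apply]
      exact hf _ ⟨k, by omega⟩
  refine ⟨fun i => (f ^ i) (fun _ => 0) 0, ?_, ?_⟩
  · intro i
    have := (heq (i + (2 ^ (m + 1) : ℕ)) i).2 (by simp [Int.ModEq])
    simp only [this]
  · intro a b hab
    have h1 : (f ^ ((a : ℕ) + 1 : ℤ)) (fun _ => 0) = (f ^ ((b : ℕ) + 1 : ℤ)) (fun _ => 0) := by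
      funext k
      have := congrFun hab k
      simp only at this
      rwa [hblock k k.2, hblock k k.2] at this
    have h2 := Int.ModEq.add_right_cancel' 1 ((heq _ _).1 h1)
    rw [Int.natCast_modEq_iff] at h2
    exact Fin.ext (Nat.ModEq.eq_of_lt_of_lt h2 a.2 b.2)
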